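/- Let (A, ·, α) be a Hom-Malcev algebra and define G(w,x,y,z) = J_α(w·x, α(y), α(z)) - α²(x)·J_α(w,y,z) - J_α(x,y,z)·α²(w). Then G is skew-symmetric (alternating) in its four variables; in particular G changes sign under any transposition of adjacent arguments and vanishes whenever two arguments are equal. -/

import Mathlib

/-- The Hom-Jacobian of a Hom-algebra with bilinear multiplication `mul` and
twisting map `α`: `J_α(x,y,z) = (x·y)·α(z) + (y·z)·α(x) + (z·x)·α(y)`. -/
def homJacobian {K : Type*} [Field K] {A : Type*} [AddCommGroup A] [Module K A]
    (mul : A →ₗ[K] A →ₗ[K] A) (α : A →ₗ[K] A) (x y z : A) : A :=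
  mul (mul x y) (α z) + mul (mul y z) (α x) + mul (mul z x) (α y)

theorem homMalcev_G_alternating {K : Type*} [Field K] [CharZero K] {A : Type*} [AddCommGroup A] [Module K A]
    (mul : A →ₗ[K] A →ₗ[K] A) (α : A →ₗ[K] A)
    (anticomm : ∀ x y : A, mul x y = - mul y x)
    (multiplicative : ∀ x y : A, α (mul x y) = mul (α x) (α y))
    (malcev : ∀ x y z : A,
      homJacobian mul α (α x) (α y) (mul x z)
        = mul (homJacobian mul α x y z) (α (α x)))
    (G : A → A → A → A → A)
    (hG : ∀ w x y z : A,
      G w x y z = homJacobian mul α (mul w x) (α y) (α z)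
          - mul (α (α x)) (homJacobian mul α w y z)
          - mul (homJacobian mul α x y z) (α (α w))) :
    (∀ w x y z : A, G x w y z = - G w x y z) ∧
    (∀ w x y z : A, G w y x z = - G w x y z) ∧
    (∀ w x y z : A, G w x z y = - G w x y z) ∧
    (∀ x y z : A, G x x y z = 0) ∧
    (∀ x y z : A, G x y x z = 0) ∧
    (∀ x y z : A, G x y z x = 0) ∧
    (∀ x y z : A, G y x x z = 0) ∧
    (∀ x y z : A, G y x z x = 0) ∧
    (∀ x y z : A, G y z x x = 0) := by
  have self0 : ∀ x : A, mul x x = 0 := fun x => by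
    have h := anticomm x x
    have h2 : (2 : K) • mul x x = 0 := by
      rw [two_smul]; nth_rewrite 1 [h]; simp
    exact (smul_eq_zero.mp h2).resolve_left two_ne_zero
  have Jcyc : ∀ x y z : A, homJacobian mul α x y z = homJacobian mul α y z x := by
    intro x y z; simp only [homJacobian]; abel
  have Jswap : ∀ x y z : A, homJacobian mul α x z y = - homJacobian mul α x y z := by
    intro x y z
    simp only [homJacobian]
    rw [anticomm x z, anticomm z y, anticomm y x]
    simp only [map_neg, LinearMap.neg_apply]; abel
  have Jself : ∀ x y : A, homJacobian mul α x y y = 0 := by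
    intro x y
    simp only [homJacobian]
    rw [anticomm y x, self0 y]
    simp
  have G12 : ∀ w x y z : A, G x w y z = - G w x y z := by
    intro w x y z
    rw [hG, hG, anticomm (α (α x)), anticomm (α (α w))]
    have : homJacobian mul α (mul x w) (α y) (α z)
        = - homJacobian mul α (mul w x) (α y) (α z) := by
      simp only [homJacobian]
      rw [anticomm x w]
      simp only [map_neg, LinearMap.neg_apply]; abel
    rw [this]; abel
  have G34 : ∀ w x y z : A, G w x z y = - G w x y z := by
    intro w x y z
    rw [hG, hG, Jswap _ (α y), Jswap w y, Jswap x y]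
    simp only [map_neg, LinearMap.neg_apply]; abel
  have G11 : ∀ x y z : A, G x x y z = 0 := by
    intro x y z
    rw [hG, self0, anticomm (α (α x))]
    simp [homJacobian]
  have G33 : ∀ x y z : A, G y z x x = 0 := by
    intro x y z
    rw [hG, Jself, Jself, Jself]; simp
  have G13 : ∀ x y z : A, G x y x z = 0 := by
    intro x y z
    rw [hG, Jcyc (mul x y), malcev, Jcyc y x z, ← Jcyc z x x, Jself]
    simp
  have G23 : ∀ x y z : A, G y x x z = 0 := by
    intro x y z
    rw [G12, G13, neg_zero]
  have add2 : ∀ w a b y z : A, G w (a + b) y z = G w a y z + G w b y z := by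
    intro w a b y z
    simp only [hG, homJacobian, map_add, LinearMap.add_apply]; abel
  have add3 : ∀ w x a b z : A, G w x (a + b) z = G w x a z + G w x b z := by
    intro w x a b z
    simp only [hG, homJacobian, map_add, LinearMap.add_apply]; abel
  refine ⟨G12, ?_, G34, G11, G13, ?_, G23, ?_, G33⟩
  · intro w x y z
    have h := G23 (x + y) w z
    rw [add2, add3, add3, G23, G23, zero_add, add_zero] at h
    exact eq_neg_of_add_eq_zero_right h
  · intro x y z
    rw [G34, G13, neg_zero]
  · intro x y z
    rw [G34, G23, neg_zero]
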